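/- arXiv:1803.07899 — 2 statements merged into one kernel-verified Lean document; each statement's English description precedes it below -/
import Mathlib

section
/- Let T be a plane tree with Łukasiewicz path W, let u ∈ T be a vertex with k_u ≥ 1 children, and let 1 ≤ j ≤ j' ≤ k_u. Then: (a) W(u·k_u) = W(u); (b) W(u·j') = min{W(m) : idx(u·j) ≤ m ≤ idx(u·j')}; and (c) j' − j = W(u·j) − W(u·j'). -/
/-!
For a vertex `v`, let `G v` be the set of non-root vertices `x` with `pr x < v < x` in
lexicographical order. The main identity is `W(v) = #(G v)`: the sum of `k_w` over `w < v` counts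
the non-root vertices whose parent precedes `v`, and these are the non-root vertices `x ≤ v`
together with `G v`; the former are as many as the vertices `w < v`, and so cancel against the
terms `-1`. In the code `G v` is `PlaneTree.pending`.

If `u·i` is a vertex, then `G (u·i)` is the disjoint union of `G u` and the younger siblings
`u·l`, `i < l ≤ k_u`, so `W(u·i) = W(u) + k_u - i`; this gives (a) and (c). For (b), every
`x ∈ G (u·j')` has `pr x ≤ u`, so `G (u·j') ⊆ G w` whenever `u < w ≤ u·j'`; and every index up to
`idx (u·j')` is the index of a vertex.
-/

/-- A plane tree: a finite nonempty set of finite sequences of positive integers containing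
the empty sequence (the root), closed under taking prefixes, and such that for every vertex
`u` there is `k_u ≥ 0` with `u ++ [i]` a vertex if and only if `1 ≤ i ≤ k_u`. -/
structure PlaneTree where
  verts : Finset (List ℕ)
  root_mem : ([] : List ℕ) ∈ verts
  prefix_closed : ∀ u ∈ verts, ∀ v : List ℕ, v <+: u → v ∈ verts
  children_iff : ∀ u ∈ verts, ∃ k : ℕ, ∀ i : ℕ, u ++ [i] ∈ verts ↔ 1 ≤ i ∧ i ≤ k

namespace PlaneTree

/-- The number `k_u` of children of a vertex `u`: the number of vertices whose parent
(the sequence with its last entry removed) is `u`. -/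
def deg (T : PlaneTree) (u : List ℕ) : ℕ :=
  (T.verts.filter fun v => v ≠ [] ∧ v.dropLast = u).card

/-- The index of a vertex `v` in the lexicographical listing `u_0 < u_1 < ⋯ < u_N` of the
vertices: the number of vertices lexicographically smaller than `v`. -/
def idx (T : PlaneTree) (v : List ℕ) : ℕ :=
  (T.verts.filter fun w => List.Lex (· < ·) w v).card

/-- The Łukasiewicz path of a plane tree: `W 0 = 0` and `W (j+1) = W j + k_{u_j} − 1`,
where `u_0 < ⋯ < u_N` is the lexicographical listing of the vertices; equivalently,
`W j = Σ_{v : idx v < j} (k_v − 1)`. -/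
def luka (T : PlaneTree) (j : ℕ) : ℤ :=
  ∑ v ∈ T.verts.filter (fun v => T.idx v < j), ((T.deg v : ℤ) - 1)

/-- The value of the Łukasiewicz path at (the index of) a vertex. -/
def lukaV (T : PlaneTree) (v : List ℕ) : ℤ := T.luka (T.idx v)

/-- `χ_u`: the last entry of a (nonempty) vertex `u`, i.e. its position among its siblings. -/
def chi (u : List ℕ) : ℕ := u.getLastD 0

end PlaneTree

namespace PlaneTree

/-! ### Lexicographical order on sequences -/

lemma lt_append_singleton (u : List ℕ) (i : ℕ) : u < u ++ [i] := by
  induction u with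
  | nil => exact List.nil_lt_cons _ _
  | cons a u ih => exact List.cons_lt_cons_iff.2 (Or.inr ⟨rfl, ih⟩)

lemma append_singleton_lt_iff (u : List ℕ) (i l : ℕ) : u ++ [i] < u ++ [l] ↔ i < l := by
  induction u with
  | nil => simp [List.cons_lt_cons_iff]
  | cons a u ih => simp [ih]

/-- A jump over the child `u·i` from a parent `p` to its child `p·l` starts at or before `u`. -/
lemma le_of_lt_append_lt (p u : List ℕ) (i l : ℕ) (h1 : p < u ++ [i])
    (h2 : u ++ [i] < p ++ [l]) : p ≤ u := by
  induction p generalizing u with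
  | nil => cases u with
    | nil => exact le_rfl
    | cons b u => exact (List.nil_lt_cons _ _).le
  | cons a p ih =>
    cases u with
    | nil =>
      simp only [List.nil_append, List.cons_append, List.cons_lt_cons_iff] at h1 h2
      rcases h1 with h1 | ⟨-, h1⟩
      · rcases h2 with h2 | ⟨h2, -⟩ <;> omega
      · exact absurd h1 (List.not_lt_nil _)
    | cons b u =>
      simp only [List.cons_append, List.cons_lt_cons_iff] at h1 h2
      rcases h1 with h1 | ⟨rfl, h1⟩
      · exact (List.cons_lt_cons_iff.2 (Or.inl h1)).le
      · rcases h2 with h2 | ⟨-, h2⟩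
        · omega
        · rcases (ih u h1 h2).lt_or_eq with h | rfl
          · exact (List.cons_lt_cons_iff.2 (Or.inr ⟨rfl, h⟩)).le
          · exact le_rfl

/-- A jump over `u` from a parent `p` to its child `p·l` also goes over every child of `u`:
`p` is a proper prefix of `u`, and `l` exceeds the next entry of `u`. -/
lemma append_lt_of_lt_lt (p u : List ℕ) (i l : ℕ) (h1 : p < u) (h2 : u < p ++ [l]) :
    u ++ [i] < p ++ [l] := by
  induction p generalizing u with
  | nil =>
    cases u with
    | nil => exact absurd h1 (lt_irrefl _)
    | cons b u =>
      simp only [List.nil_append, List.cons_append, List.cons_lt_cons_iff] at h2 ⊢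
      rcases h2 with h2 | ⟨-, h2⟩
      · exact Or.inl h2
      · exact absurd h2 (List.not_lt_nil _)
  | cons a p ih =>
    cases u with
    | nil => exact absurd h1 (List.not_lt_nil _)
    | cons b u =>
      simp only [List.cons_append, List.cons_lt_cons_iff] at h1 h2 ⊢
      rcases h2 with h2 | ⟨rfl, h2⟩
      · exact Or.inl h2
      · rcases h1 with h1 | ⟨-, h1⟩
        · omega
        · exact Or.inr ⟨rfl, ih u h1 h2⟩

lemma dropLast_lt {x : List ℕ} (hx : x ≠ []) : x.dropLast < x := by
  have h := lt_append_singleton x.dropLast (x.getLast hx)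
  rwa [List.dropLast_append_getLast] at h

/-! ### Degrees and indices -/

lemma append_mem_iff (T : PlaneTree) {u : List ℕ} (hu : u ∈ T.verts) (i : ℕ) :
    u ++ [i] ∈ T.verts ↔ 1 ≤ i ∧ i ≤ T.deg u := by
  obtain ⟨k, hk⟩ := T.children_iff u hu
  have hd : T.deg u = k := by
    have : (T.verts.filter fun v => v ≠ [] ∧ v.dropLast = u)
        = (Finset.Icc 1 k).image (fun i => u ++ [i]) := by
      ext x
      simp only [Finset.mem_filter, Finset.mem_image, Finset.mem_Icc]
      constructor
      · rintro ⟨hx, hne, rfl⟩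
        refine ⟨x.getLast hne, (hk _).1 ?_, List.dropLast_append_getLast hne⟩
        rwa [List.dropLast_append_getLast]
      · rintro ⟨i, hi, rfl⟩
        exact ⟨(hk i).2 hi, by simp, by simp⟩
    rw [deg, this, Finset.card_image_of_injective _ (fun a b h => by simpa using h)]
    simp
  rw [hk, hd]

lemma idx_lt_idx (T : PlaneTree) {v w : List ℕ} (hv : v ∈ T.verts) (h : v < w) :
    T.idx v < T.idx w := by
  refine Finset.card_lt_card (Finset.ssubset_iff_of_subset ?_ |>.2 ⟨v, ?_, ?_⟩)
  · intro x hx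
    rw [Finset.mem_filter] at hx ⊢
    exact ⟨hx.1, lt_trans (show x < v from hx.2) h⟩
  · exact Finset.mem_filter.2 ⟨hv, h⟩
  · intro hx
    exact lt_irrefl v (Finset.mem_filter.1 hx).2

lemma idx_lt_idx_iff (T : PlaneTree) {v w : List ℕ} (hv : v ∈ T.verts) (hw : w ∈ T.verts) :
    T.idx v < T.idx w ↔ v < w := by
  refine ⟨fun h => ?_, T.idx_lt_idx hv⟩
  rcases lt_trichotomy v w with h' | rfl | h'
  · exact h'
  · omega
  · have := T.idx_lt_idx hw h'
    omega

lemma idx_lt_card (T : PlaneTree) {v : List ℕ} (hv : v ∈ T.verts) :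
    T.idx v < T.verts.card := by
  refine Finset.card_lt_card (Finset.ssubset_iff_of_subset (Finset.filter_subset _ _) |>.2
    ⟨v, hv, ?_⟩)
  intro hx
  exact lt_irrefl v (Finset.mem_filter.1 hx).2

/-- Every `m < #T` is the index of a vertex: `idx` is injective from `T` to `{0, …, #T - 1}`. -/
lemma exists_idx_eq (T : PlaneTree) {m : ℕ} (hm : m < T.verts.card) :
    ∃ w ∈ T.verts, T.idx w = m := by
  have hinj : Set.InjOn T.idx T.verts := by
    intro v hv w hw h
    rcases lt_trichotomy v w with h' | h' | h'
    · exact absurd (T.idx_lt_idx hv h') (by omega)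
    · exact h'
    · exact absurd (T.idx_lt_idx hw h') (by omega)
  have heq : T.verts.image T.idx = Finset.range T.verts.card := by
    refine Finset.eq_of_subset_of_card_le ?_ ?_
    · intro x hx
      obtain ⟨v, hv, rfl⟩ := Finset.mem_image.1 hx
      exact Finset.mem_range.2 (T.idx_lt_card hv)
    · rw [Finset.card_image_of_injOn hinj, Finset.card_range]
  have hm' := Finset.mem_range.2 hm
  rw [← heq] at hm'
  exact Finset.mem_image.1 hm'

/-! ### The path counts pending vertices -/

/-- The non-root vertices lexicographically larger than `v` whose parent is smaller than `v`. -/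
def pending (T : PlaneTree) (v : List ℕ) : Finset (List ℕ) :=
  T.verts.filter fun x => x ≠ [] ∧ x.dropLast < v ∧ v < x

lemma mem_pending {T : PlaneTree} {v x : List ℕ} :
    x ∈ T.pending v ↔ x ∈ T.verts ∧ x ≠ [] ∧ x.dropLast < v ∧ v < x := by
  simp [pending]

lemma lukaV_eq_card (T : PlaneTree) {v : List ℕ} (hv : v ∈ T.verts) :
    T.lukaV v = (T.pending v).card := by
  have hB : T.verts.filter (fun w => T.idx w < T.idx v) = T.verts.filter (fun w => w < v) :=
    Finset.filter_congr fun w hw => T.idx_lt_idx_iff hw hv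
  rw [lukaV, luka, hB, Finset.sum_sub_distrib]
  set B := T.verts.filter (fun w => w < v) with hBdef
  set A := T.verts.filter (fun x => x ≠ [] ∧ x.dropLast < v) with hAdef
  have hA : A.card = ∑ w ∈ B, T.deg w := by
    rw [Finset.card_eq_sum_card_fiberwise (f := List.dropLast) (t := B)]
    · refine Finset.sum_congr rfl fun w hw => ?_
      rw [deg]
      congr 1
      ext x
      simp only [hAdef, hBdef, Finset.mem_filter] at hw ⊢
      constructor
      · rintro ⟨⟨h1, h2, -⟩, h3⟩
        exact ⟨h1, h2, h3⟩
      · rintro ⟨h1, h2, h3⟩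
        exact ⟨⟨h1, h2, h3 ▸ hw.2⟩, h3⟩
    · intro x hx
      obtain ⟨h1, hne, h3⟩ := Finset.mem_filter.1 hx
      exact Finset.mem_filter.2 ⟨T.prefix_closed x h1 _
        ⟨[x.getLast hne], List.dropLast_append_getLast hne⟩, h3⟩
  have hdisj : Disjoint (T.pending v) B := by
    rw [Finset.disjoint_left]
    intro x hx hx'
    exact lt_asymm (mem_pending.1 hx).2.2.2 (Finset.mem_filter.1 hx').2
  have hcard : A.card = (T.pending v).card + B.card := by
    rcases eq_or_ne v [] with rfl | hne
    · have h1 : A = ∅ := Finset.filter_eq_empty_iff.2 fun x _ h => List.not_lt_nil _ h.2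
      have h2 : B = ∅ := Finset.filter_eq_empty_iff.2 fun x _ h => List.not_lt_nil _ h
      have h3 : T.pending [] = ∅ :=
        Finset.filter_eq_empty_iff.2 fun x _ h => List.not_lt_nil _ h.2.1
      simp [h1, h2, h3]
    · have hnil : ([] : List ℕ) < v := by
        cases v with
        | nil => exact absurd rfl hne
        | cons a v => exact List.nil_lt_cons _ _
      -- The root lies in `B` but not in `A`, while `v` lies in `A` but not in `B`.
      have heq : insert [] A = insert v (T.pending v ∪ B) := by
        ext x
        simp only [hAdef, hBdef, Finset.mem_insert, Finset.mem_union, Finset.mem_filter,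
          mem_pending]
        constructor
        · rintro (rfl | ⟨h1, h2, h3⟩)
          · exact Or.inr (Or.inr ⟨T.root_mem, hnil⟩)
          · rcases lt_trichotomy x v with h | h | h
            · exact Or.inr (Or.inr ⟨h1, h⟩)
            · exact Or.inl h
            · exact Or.inr (Or.inl ⟨h1, h2, h3, h⟩)
        · rintro (rfl | ⟨h1, h2, h3, -⟩ | ⟨h1, h2⟩)
          · exact Or.inr ⟨hv, hne, dropLast_lt hne⟩
          · exact Or.inr ⟨h1, h2, h3⟩
          · by_cases hx : x = []
            · exact Or.inl hx
            · exact Or.inr ⟨h1, hx, (dropLast_lt hx).trans h2⟩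
      have hn1 : ([] : List ℕ) ∉ A := by simp [hAdef]
      have hn2 : v ∉ T.pending v ∪ B := by simp [hBdef, mem_pending]
      have := congrArg Finset.card heq
      rw [Finset.card_insert_of_notMem hn1, Finset.card_insert_of_notMem hn2,
        Finset.card_union_of_disjoint hdisj] at this
      omega
  have hcast : (∑ w ∈ B, (T.deg w : ℤ)) = (A.card : ℤ) := by rw [hA]; push_cast; rfl
  rw [hcast, hcard]
  simp

lemma dropLast_le_of_mem_pending {T : PlaneTree} {u x : List ℕ} {i : ℕ}
    (hx : x ∈ T.pending (u ++ [i])) : x.dropLast ≤ u := by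
  obtain ⟨-, hne, h1, h2⟩ := mem_pending.1 hx
  rw [← List.dropLast_append_getLast hne] at h2
  exact le_of_lt_append_lt _ _ _ _ h1 h2

/-- Moving from `u` to its child `u·i` adds to the pending vertices exactly the younger siblings
`u·l`, `i < l ≤ k_u`, of that child. -/
lemma lukaV_child (T : PlaneTree) {u : List ℕ} (hu : u ∈ T.verts) {i : ℕ} (h1 : 1 ≤ i)
    (hi : i ≤ T.deg u) : T.lukaV (u ++ [i]) = T.lukaV u + (T.deg u - i) := by
  rw [lukaV_eq_card T ((T.append_mem_iff hu i).2 ⟨h1, hi⟩), lukaV_eq_card T hu]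
  have heq : T.pending (u ++ [i])
      = T.pending u ∪ (Finset.Ioc i (T.deg u)).image (fun l => u ++ [l]) := by
    ext x
    rw [Finset.mem_union]
    constructor
    · intro hx
      obtain ⟨hxT, hne, h3, h4⟩ := mem_pending.1 hx
      rcases (dropLast_le_of_mem_pending hx).lt_or_eq with h | h
      · exact Or.inl (mem_pending.2 ⟨hxT, hne, h, (lt_append_singleton u i).trans h4⟩)
      · refine Or.inr (Finset.mem_image.2 ⟨x.getLast hne, ?_, ?_⟩)
        · have hx' : x = u ++ [x.getLast hne] := by
            rw [← h, List.dropLast_append_getLast]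
          rw [hx', append_singleton_lt_iff] at h4
          rw [hx', T.append_mem_iff hu] at hxT
          exact Finset.mem_Ioc.2 ⟨h4, hxT.2⟩
        · rw [← h]
          exact List.dropLast_append_getLast hne
    · rintro (hx | hx)
      · obtain ⟨hxT, hne, h3, h4⟩ := mem_pending.1 hx
        refine mem_pending.2 ⟨hxT, hne, h3.trans (lt_append_singleton u i), ?_⟩
        rw [← List.dropLast_append_getLast hne] at h4 ⊢
        exact append_lt_of_lt_lt _ _ _ _ h3 h4
      · obtain ⟨l, hl, rfl⟩ := Finset.mem_image.1 hx
        rw [Finset.mem_Ioc] at hl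
        refine mem_pending.2 ⟨(T.append_mem_iff hu l).2 ⟨by omega, hl.2⟩, by simp, ?_, ?_⟩
        · simpa using lt_append_singleton u i
        · exact (append_singleton_lt_iff u i l).2 hl.1
  have hdisj : Disjoint (T.pending u)
      ((Finset.Ioc i (T.deg u)).image (fun l => u ++ [l])) := by
    rw [Finset.disjoint_left]
    intro x hx hx'
    obtain ⟨l, -, rfl⟩ := Finset.mem_image.1 hx'
    simpa using (mem_pending.1 hx).2.2.1
  rw [heq, Finset.card_union_of_disjoint hdisj,
    Finset.card_image_of_injective _ (fun a b h => by simpa using h), Nat.card_Ioc]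
  push_cast [Nat.cast_sub hi]
  ring

/-- The vertices pending at `u·i` all have a parent `≤ u`, hence are already pending at `w`. -/
lemma lukaV_child_le (T : PlaneTree) {u w : List ℕ} {i : ℕ} (hv : u ++ [i] ∈ T.verts)
    (hw : w ∈ T.verts) (huw : u < w) (hwi : w ≤ u ++ [i]) :
    T.lukaV (u ++ [i]) ≤ T.lukaV w := by
  rw [lukaV_eq_card T hv, lukaV_eq_card T hw]
  refine Nat.cast_le.2 (Finset.card_le_card fun x hx => ?_)
  obtain ⟨hxT, hne, -, h⟩ := mem_pending.1 hx
  exact mem_pending.2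
    ⟨hxT, hne, (dropLast_le_of_mem_pending hx).trans_lt huw, hwi.trans_lt h⟩

end PlaneTree

/-- Lemma 2.1: let `T` be a plane tree with Łukasiewicz path `W`, let `u ∈ T` have
`k_u ≥ 1` children and let `1 ≤ j ≤ j' ≤ k_u`. Then `W(u·k_u) = W(u)`,
`W(u·j') = min{W(m) : idx(u·j) ≤ m ≤ idx(u·j')}`, and `j' − j = W(u·j) − W(u·j')`. -/
theorem luka_children (T : PlaneTree) (u : List ℕ) (hu : u ∈ T.verts)
    (hdeg : 1 ≤ T.deg u) (j j' : ℕ) (h1j : 1 ≤ j) (hjj' : j ≤ j') (hj' : j' ≤ T.deg u) :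
    T.lukaV (u ++ [T.deg u]) = T.lukaV u
    ∧ T.lukaV (u ++ [j']) =
        sInf {w : ℤ | ∃ m : ℕ, T.idx (u ++ [j]) ≤ m ∧ m ≤ T.idx (u ++ [j']) ∧ w = T.luka m}
    ∧ (j' : ℤ) - (j : ℤ) = T.lukaV (u ++ [j]) - T.lukaV (u ++ [j']) := by
  have hm : u ++ [j] ∈ T.verts := (T.append_mem_iff hu j).2 ⟨h1j, hjj'.trans hj'⟩
  have hm' : u ++ [j'] ∈ T.verts := (T.append_mem_iff hu j').2 ⟨h1j.trans hjj', hj'⟩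
  refine ⟨?_, ?_, ?_⟩
  · rw [T.lukaV_child hu hdeg le_rfl]
    ring
  · symm
    apply IsLeast.csInf_eq
    constructor
    · refine ⟨T.idx (u ++ [j']), ?_, le_rfl, rfl⟩
      rcases hjj'.lt_or_eq with h | rfl
      · exact (T.idx_lt_idx hm ((PlaneTree.append_singleton_lt_iff u j j').2 h)).le
      · exact le_rfl
    · rintro _ ⟨m, hjm, hmj, rfl⟩
      obtain ⟨w, hw, rfl⟩ := T.exists_idx_eq (hmj.trans_lt (T.idx_lt_card hm'))
      refine T.lukaV_child_le hm' hw ?_ ?_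
      · refine (PlaneTree.lt_append_singleton u j).trans_le (not_lt.1 fun h => ?_)
        exact absurd (T.idx_lt_idx hw h) (by omega)
      · refine not_lt.1 fun h => ?_
        exact absurd (T.idx_lt_idx hm' h) (by omega)
  · rw [T.lukaV_child hu h1j (hjj'.trans hj'), T.lukaV_child hu (h1j.trans hjj') hj']
    ring
end

section
/- For every k ≥ 1 and every 1 ≤ j ≤ k: Σ_{x ∈ 𝓑_k⁺} x_j = 0 and Σ_{x ∈ 𝓑_k⁺} x_j² = (2j(k−j)/(k+1)) · C(2k−1, k−1), and consequently Σ_{j=1}^{k} Σ_{x ∈ 𝓑_k⁺} x_j² = (k(k−1)/3) · C(2k−1, k−1). Equivalently, if (X_1, …, X_k) is uniformly distributed on 𝓑_k⁺, then E[X_j] = 0, E[X_j²] = 2j(k−j)/(k+1), and Σ_{j=1}^{k} E[X_j²] = k(k−1)/3. -/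
/-!
Writing `y_i = x_i - x_{i-1} + 1`, bridges of length `k` correspond to `k`-tuples of natural numbers
with sum `k` (`bridgeSet_eq_image`, `bridgeOf_injective`), and `x_j = ∑_{i ≤ j} z_i` with
`z_i = y_i - 1`.
The set of these tuples is invariant under permutation of coordinates and `∑_i z_i = 0` on it. Hence
`∑_y z_i` vanishes for every `i`, which gives the first moment. Likewise `c = ∑_y z_i²` does not
depend on `i`, and neither does `∑_y z_i z_l` depend on `l ≠ i`, so expanding `∑_y z_i (∑_l z_l) = 0`
yields `(k - 1) ∑_y z_i z_l = -c` for `i ≠ l` (`sum_mul_of_ne`). Summing over `i, l ≤ j`,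
`(k - 1) ∑_y x_j² = j (k - j) c` (`sum_partial_sq`).

It remains to compute `c`. The number of `d`-tuples with sum `n` is the coefficient of `X ^ n` in
`(1 - X)⁻ᵈ`, and weighting a `(d + 1)`-tuple by `(y_0 + 1)(y_0 + 2) / 2` or by `y_0 + 1` replaces the
factor `(1 - X)⁻¹` belonging to `y_0` by `(1 - X)⁻³` or `(1 - X)⁻²`. So these weighted counts are
again binomial coefficients, and they give `(k + 1) c = 2 (k - 1) C(2k - 1, k - 1)`
(`second_moment`).
-/

/-- The set `𝓑_k⁺` of discrete bridges with no negative jumps: integer sequences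
`(x 0, …, x (k-1))` (representing `(x_1, …, x_k)`) such that all increments, the first one
being measured from `x_0 = 0`, lie in `{-1, 0, 1, 2, …}`, and the final value `x_k` is `0`. -/
def bridgeSet (k : ℕ) : Set (Fin k → ℤ) :=
  {x | (∀ j : Fin k,
          -1 ≤ x j - (if (j : ℕ) = 0 then 0 else
            x ⟨(j : ℕ) - 1, Nat.lt_of_le_of_lt (Nat.sub_le _ _) j.isLt⟩))
    ∧ ∀ j : Fin k, (j : ℕ) = k - 1 → x j = 0}

open Finset PowerSeries

/-! ### Bridges and tuples with prescribed sum -/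

/-- The sequence whose increments are `y_i - 1`, started at `0`. -/
def bridgeOf {k : ℕ} (y : Fin k → ℕ) (i : Fin k) : ℤ :=
  ∑ l ∈ univ.filter (fun l : Fin k => l ≤ i), ((y l : ℤ) - 1)

lemma bridgeOf_rec {k : ℕ} (y : Fin k → ℕ) (j : Fin k) :
    bridgeOf y j = (if (j : ℕ) = 0 then 0 else
      bridgeOf y ⟨(j : ℕ) - 1, Nat.lt_of_le_of_lt (Nat.sub_le _ _) j.isLt⟩) + ((y j : ℤ) - 1) := by
  unfold bridgeOf
  split_ifs with h
  · have : univ.filter (fun l : Fin k => l ≤ j) = {j} := by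
      ext l
      simp only [mem_filter, mem_univ, true_and, mem_singleton, Fin.le_def, Fin.ext_iff]
      omega
    rw [this]
    simp
  · have : univ.filter (fun l : Fin k => l ≤ j) = insert j (univ.filter (fun l : Fin k =>
        l ≤ ⟨(j : ℕ) - 1, Nat.lt_of_le_of_lt (Nat.sub_le _ _) j.isLt⟩)) := by
      ext l
      simp only [mem_filter, mem_univ, true_and, mem_insert, Fin.le_def, Fin.ext_iff]
      omega
    rw [this, sum_insert, add_comm]
    simp only [mem_filter, mem_univ, true_and, Fin.le_def]
    omega

lemma bridgeOf_last {k : ℕ} (y : Fin k → ℕ) (j : Fin k) (hj : (j : ℕ) = k - 1) :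
    bridgeOf y j = ((∑ i, y i : ℕ) : ℤ) - k := by
  have : univ.filter (fun l : Fin k => l ≤ j) = univ := by
    ext l
    simp only [mem_filter, mem_univ, true_and, Fin.le_def, iff_true]
    omega
  simp [bridgeOf, this]

lemma bridgeOf_injective {k : ℕ} : Function.Injective (bridgeOf (k := k)) := by
  intro y y' h
  funext j
  have h1 := bridgeOf_rec y j
  have h2 := bridgeOf_rec y' j
  rw [h, h2] at h1
  omega

lemma bridgeSet_eq_image {k : ℕ} (hk : 1 ≤ k) :
    bridgeSet k = bridgeOf '' (Finset.Nat.antidiagonalTuple k k : Set (Fin k → ℕ)) := by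
  ext x
  simp only [Set.mem_image, mem_coe, Finset.Nat.mem_antidiagonalTuple]
  constructor
  · rintro ⟨h1, h2⟩
    let y : Fin k → ℕ := fun j => (x j - (if (j : ℕ) = 0 then 0 else
            x ⟨(j : ℕ) - 1, Nat.lt_of_le_of_lt (Nat.sub_le _ _) j.isLt⟩) + 1).toNat
    have hy : ∀ n (hn : n < k), bridgeOf y ⟨n, hn⟩ = x ⟨n, hn⟩ := by
      intro n
      induction n with
      | zero =>
        intro hn
        have := h1 ⟨0, hn⟩
        rw [bridgeOf_rec]
        simp only [if_true, y] at this ⊢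
        omega
      | succ n ih =>
        intro hn
        have := h1 ⟨n + 1, hn⟩
        rw [bridgeOf_rec]
        simp only [Nat.add_sub_cancel, Nat.add_eq_zero_iff, one_ne_zero, and_false, if_false,
          ih (by omega), y] at this ⊢
        omega
    refine ⟨y, ?_, funext fun i => hy i i.isLt⟩
    have h3 := bridgeOf_last y ⟨k - 1, by omega⟩ rfl
    rw [hy, h2 _ rfl] at h3
    omega
  · rintro ⟨y, hy, rfl⟩
    refine ⟨fun j => ?_, fun j hj => ?_⟩
    · rw [bridgeOf_rec y j]
      omega
    · rw [bridgeOf_last y j hj, hy]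
      omega

lemma finsum_bridgeSet {k : ℕ} (hk : 1 ≤ k) (f : (Fin k → ℤ) → ℝ) :
    ∑ᶠ x ∈ bridgeSet k, f x = ∑ y ∈ Finset.Nat.antidiagonalTuple k k, f (bridgeOf y) := by
  rw [bridgeSet_eq_image hk, finsum_mem_image bridgeOf_injective.injOn, finsum_mem_coe_finset]

/-! ### Weighted counts of tuples -/

lemma sum_tuple_succ (d n : ℕ) (f : ℕ → ℝ) :
    ∑ y ∈ Finset.Nat.antidiagonalTuple (d + 1) n, f (y 0)
      = ∑ p ∈ antidiagonal n, f p.1 * (Finset.Nat.antidiagonalTuple d p.2).card := by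
  have : ∀ p ∈ antidiagonal n, f p.1 * ((Finset.Nat.antidiagonalTuple d p.2).card : ℝ)
      = ∑ y ∈ Finset.Nat.antidiagonalTuple d p.2, f p.1 := by
    intro p _
    rw [sum_const, nsmul_eq_mul, mul_comm]
  rw [sum_congr rfl this, sum_sigma']
  refine sum_bij' (fun y _ => ⟨(y 0, ∑ i, y (Fin.succ i)), fun i => y (Fin.succ i)⟩)
    (fun q _ => Fin.cons q.1.1 q.2) ?_ ?_ ?_ ?_ ?_
  · intro y hy
    rw [Finset.Nat.mem_antidiagonalTuple, Fin.sum_univ_succ] at hy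
    simp [Finset.Nat.mem_antidiagonalTuple, hy]
  · rintro ⟨⟨a, b⟩, y⟩ hy
    simp only [mem_sigma, HasAntidiagonal.mem_antidiagonal, Finset.Nat.mem_antidiagonalTuple] at hy ⊢
    simp [Fin.sum_univ_succ, hy.2, hy.1]
  · intro y _
    exact Fin.cons_self_tail y
  · rintro ⟨⟨a, b⟩, y⟩ hy
    simp only [mem_sigma, HasAntidiagonal.mem_antidiagonal, Finset.Nat.mem_antidiagonalTuple] at hy
    simp [hy.2]
  · intro y _
    rfl

/-- The generating function of the number of `d`-tuples with given sum is `(1 - X)⁻ᵈ`. -/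
lemma card_tuple (d n : ℕ) :
    ((Finset.Nat.antidiagonalTuple d n).card : ℝ) = coeff n (invOneSubPow ℝ d).val := by
  induction d generalizing n with
  | zero =>
    rw [invOneSubPow_zero, Units.val_one, coeff_one]
    cases n <;> simp
  | succ d ih =>
    have h := sum_tuple_succ d n (fun _ => 1)
    rw [sum_const, nsmul_eq_mul, mul_one] at h
    rw [h, add_comm, invOneSubPow_add, Units.val_mul, coeff_mul]
    refine sum_congr rfl fun p _ => ?_
    rw [ih, invOneSubPow_val_succ_eq_mk_add_choose ℝ 0]
    simp

/-- Weighting by `C(e + y_0, e)` amounts to splitting the coordinate `y_0` into `e + 1` parts. -/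
lemma sum_choose_tuple (d e n : ℕ) :
    ∑ y ∈ Finset.Nat.antidiagonalTuple (d + 1) n, (((e + y 0).choose e : ℕ) : ℝ)
      = (((d + e) + n).choose (d + e) : ℕ) := by
  rw [sum_tuple_succ d n (fun m => (((e + m).choose e : ℕ) : ℝ))]
  have h : coeff n (invOneSubPow ℝ ((e + 1) + d)).val = (((d + e) + n).choose (d + e) : ℕ) := by
    rw [show (e + 1) + d = (d + e) + 1 by ring, invOneSubPow_val_succ_eq_mk_add_choose, coeff_mk]
  rw [← h, invOneSubPow_add, Units.val_mul, coeff_mul]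
  refine sum_congr rfl fun p _ => ?_
  rw [card_tuple, invOneSubPow_val_succ_eq_mk_add_choose, coeff_mk]

lemma second_moment_zero (d : ℕ) :
    ((d : ℝ) + 2) * ∑ y ∈ Finset.Nat.antidiagonalTuple (d + 1) (d + 1), ((y 0 : ℝ) - 1) ^ 2
      = 2 * d * ((2 * d + 1).choose d : ℕ) := by
  have h0 := sum_choose_tuple d 0 (d + 1)
  have h1 := sum_choose_tuple d 1 (d + 1)
  have h2 := sum_choose_tuple d 2 (d + 1)
  have key : ∀ y : Fin (d + 1) → ℕ, ((y 0 : ℝ) - 1) ^ 2 = 2 * (((2 + y 0).choose 2 : ℕ) : ℝ)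
      - 5 * (((1 + y 0).choose 1 : ℕ) : ℝ) + 4 * (((0 + y 0).choose 0 : ℕ) : ℝ) := by
    intro y
    rw [Nat.cast_choose_two]
    simp only [Nat.choose_one_right, Nat.choose_zero_right]
    push_cast
    ring
  rw [sum_congr rfl fun y _ => key y, sum_add_distrib, sum_sub_distrib, ← mul_sum, ← mul_sum,
    ← mul_sum, h0, h1, h2]
  -- All three binomials are rational multiples of `C(2d + 1, d)`.
  have e0 : (d + 0 + (d + 1)).choose (d + 0) = (2 * d + 1).choose d := by
    congr 1; ring
  have e1 : (d + 1 + (d + 1)).choose (d + 1) = 2 * (2 * d + 1).choose d := by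
    rw [show d + 1 + (d + 1) = (2 * d + 1) + 1 by ring, Nat.choose_succ_succ,
      ← Nat.choose_symm_half d]
    ring
  have e2 : (d + 2 + (d + 1)).choose (d + 2) * (d + 2)
      = (2 * d + 3) * (2 * (2 * d + 1).choose d) := by
    rw [← e1, show d + 2 + (d + 1) = (2 * d + 2) + 1 by ring,
      show d + 1 + (d + 1) = 2 * d + 2 by ring]
    exact (Nat.add_one_mul_choose_eq (2 * d + 2) (d + 1)).symm
  have e2' : (((d + 2 + (d + 1)).choose (d + 2) : ℕ) : ℝ) * (d + 2)
      = (2 * d + 3) * (2 * ((2 * d + 1).choose d : ℕ)) := by exact_mod_cast e2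
  rw [e0, e1]
  push_cast
  linear_combination 2 * e2'

/-! ### Moments of the increments by exchangeability -/

lemma sum_tuple_perm {k n : ℕ} (σ : Equiv.Perm (Fin k)) (f : (Fin k → ℕ) → ℝ) :
    ∑ y ∈ Finset.Nat.antidiagonalTuple k n, f (y ∘ σ)
      = ∑ y ∈ Finset.Nat.antidiagonalTuple k n, f y := by
  refine sum_bij' (fun y _ => y ∘ σ) (fun y _ => y ∘ σ.symm) ?_ ?_ ?_ ?_ ?_
  · intro y hy
    rw [Finset.Nat.mem_antidiagonalTuple] at hy ⊢
    rw [← hy]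
    exact Equiv.sum_comp σ y
  · intro y hy
    rw [Finset.Nat.mem_antidiagonalTuple] at hy ⊢
    rw [← hy]
    exact Equiv.sum_comp σ.symm y
  · intro y _
    ext; simp
  · intro y _
    ext; simp
  · intro y _
    rfl

lemma sum_increments {k : ℕ} {y : Fin k → ℕ} (hy : y ∈ Finset.Nat.antidiagonalTuple k k) :
    ∑ i, ((y i : ℝ) - 1) = 0 := by
  rw [Finset.Nat.mem_antidiagonalTuple] at hy
  have : ((∑ i, y i : ℕ) : ℝ) = k := by rw [hy]
  push_cast at this
  simp [this]

lemma first_moment {k : ℕ} (i : Fin k) :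
    ∑ y ∈ Finset.Nat.antidiagonalTuple k k, ((y i : ℝ) - 1) = 0 := by
  have h : ∀ l : Fin k, ∑ y ∈ Finset.Nat.antidiagonalTuple k k, ((y l : ℝ) - 1)
      = ∑ y ∈ Finset.Nat.antidiagonalTuple k k, ((y i : ℝ) - 1) := by
    intro l
    rw [← sum_tuple_perm (Equiv.swap i l) (fun y => (y l : ℝ) - 1)]
    simp
  have h2 : ∑ l : Fin k, ∑ y ∈ Finset.Nat.antidiagonalTuple k k, ((y l : ℝ) - 1) = 0 := by
    rw [sum_comm]
    exact sum_eq_zero fun y hy => sum_increments hy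
  rw [sum_congr rfl fun l _ => h l, sum_const, card_univ, Fintype.card_fin, nsmul_eq_mul] at h2
  have hk : (k : ℝ) ≠ 0 := by
    have := i.isLt
    exact_mod_cast (by omega : k ≠ 0)
  exact (mul_eq_zero.mp h2).resolve_left hk

lemma second_moment {k : ℕ} (i : Fin k) :
    ((k : ℝ) + 1) * ∑ y ∈ Finset.Nat.antidiagonalTuple k k, ((y i : ℝ) - 1) ^ 2
      = 2 * ((k : ℝ) - 1) * ((2 * k - 1).choose (k - 1) : ℕ) := by
  obtain ⟨d, rfl⟩ : ∃ d, k = d + 1 := ⟨k - 1, by have := i.isLt; omega⟩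
  have h := second_moment_zero d
  rw [← sum_tuple_perm (Equiv.swap 0 i) (fun y => ((y i : ℝ) - 1) ^ 2)]
  simp only [Function.comp_apply, Equiv.swap_apply_right]
  rw [show 2 * (d + 1) - 1 = 2 * d + 1 by omega, Nat.add_sub_cancel]
  push_cast
  linear_combination h

lemma sum_mul_of_ne {k : ℕ} {i l : Fin k} (hil : i ≠ l) :
    ((k : ℝ) - 1) * ∑ y ∈ Finset.Nat.antidiagonalTuple k k, ((y i : ℝ) - 1) * ((y l : ℝ) - 1)
      = - ∑ y ∈ Finset.Nat.antidiagonalTuple k k, ((y i : ℝ) - 1) ^ 2 := by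
  have h : ∀ m ∈ univ.erase i,
      ∑ y ∈ Finset.Nat.antidiagonalTuple k k, ((y i : ℝ) - 1) * ((y m : ℝ) - 1)
      = ∑ y ∈ Finset.Nat.antidiagonalTuple k k, ((y i : ℝ) - 1) * ((y l : ℝ) - 1) := by
    intro m hm
    have hm' : i ≠ m := (ne_of_mem_erase hm).symm
    rw [← sum_tuple_perm (Equiv.swap l m) (fun y => ((y i : ℝ) - 1) * ((y m : ℝ) - 1))]
    simp [Equiv.swap_apply_of_ne_of_ne hil hm']
  have h2 : ∑ m : Fin k,
      ∑ y ∈ Finset.Nat.antidiagonalTuple k k, ((y i : ℝ) - 1) * ((y m : ℝ) - 1) = 0 := by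
    rw [sum_comm]
    refine sum_eq_zero fun y hy => ?_
    rw [← mul_sum, sum_increments hy, mul_zero]
  rw [← add_sum_erase _ _ (mem_univ i), sum_congr rfl h, sum_const, card_erase_of_mem (mem_univ i),
    card_univ, Fintype.card_fin, nsmul_eq_mul, Nat.cast_sub (by have := i.isLt; omega)] at h2
  simp only [pow_two]
  push_cast at h2
  linear_combination h2

/-! ### Moments of the bridge -/

lemma sum_partial_sq {k : ℕ} (i₀ : Fin k) (s : Finset (Fin k)) :
    ((k : ℝ) - 1) * ∑ y ∈ Finset.Nat.antidiagonalTuple k k, (∑ i ∈ s, ((y i : ℝ) - 1)) ^ 2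
      = s.card * ((k : ℝ) - s.card)
        * ∑ y ∈ Finset.Nat.antidiagonalTuple k k, ((y i₀ : ℝ) - 1) ^ 2 := by
  set c := ∑ y ∈ Finset.Nat.antidiagonalTuple k k, ((y i₀ : ℝ) - 1) ^ 2 with hc
  have hcc : ∀ i, ∑ y ∈ Finset.Nat.antidiagonalTuple k k, ((y i : ℝ) - 1) ^ 2 = c := by
    intro i
    rw [← sum_tuple_perm (Equiv.swap i₀ i) (fun y => ((y i : ℝ) - 1) ^ 2)]
    simp [hc]
  have hB : ∀ i l : Fin k, ((k : ℝ) - 1) *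
      ∑ y ∈ Finset.Nat.antidiagonalTuple k k, ((y i : ℝ) - 1) * ((y l : ℝ) - 1)
      = (if i = l then k * c else 0) - c := by
    intro i l
    split_ifs with h
    · subst h
      simp only [← pow_two, hcc]
      ring
    · rw [sum_mul_of_ne h, hcc]
      ring
  simp only [pow_two (∑ i ∈ s, _), sum_mul_sum]
  rw [sum_comm, sum_congr rfl fun i _ => sum_comm, mul_sum]
  simp only [mul_sum (s := s), hB, sum_sub_distrib, sum_ite_eq, sum_const, nsmul_eq_mul]
  rw [sum_ite_mem, inter_self, sum_const, nsmul_eq_mul]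
  ring

lemma bridgeOf_cast {k : ℕ} (y : Fin k → ℕ) (i : Fin k) :
    ((bridgeOf y i : ℤ) : ℝ) = ∑ l ∈ univ.filter (fun l : Fin k => l ≤ i), ((y l : ℝ) - 1) := by
  simp [bridgeOf]

lemma card_filter_le_index {k : ℕ} (i : Fin k) :
    (univ.filter (fun l : Fin k => l ≤ i)).card = (i : ℕ) + 1 := by
  rw [show univ.filter (fun l : Fin k => l ≤ i) = Iic i by ext; simp, Fin.card_Iic]

lemma bridge_first {k : ℕ} (i : Fin k) :
    ∑ᶠ x ∈ bridgeSet k, ((x i : ℤ) : ℝ) = 0 := by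
  rw [finsum_bridgeSet (by have := i.isLt; omega) (fun x => ((x i : ℤ) : ℝ))]
  simp only [bridgeOf_cast]
  rw [sum_comm]
  exact sum_eq_zero fun l _ => first_moment l

lemma bridge_second {k : ℕ} (i : Fin k) :
    ∑ᶠ x ∈ bridgeSet k, ((x i : ℤ) : ℝ) ^ 2
      = 2 * ((i : ℝ) + 1) * ((k : ℝ) - ((i : ℝ) + 1)) / ((k : ℝ) + 1)
        * ((2 * k - 1).choose (k - 1) : ℕ) := by
  have hi := i.isLt
  rw [finsum_bridgeSet (by omega) (fun x => ((x i : ℤ) : ℝ) ^ 2)]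
  simp only [bridgeOf_cast]
  rcases Nat.lt_or_ge 1 k with hk | hk
  · have h1 := sum_partial_sq i (univ.filter (fun l : Fin k => l ≤ i))
    have h2 := second_moment i
    rw [card_filter_le_index] at h1
    push_cast at h1
    have hk1 : (k : ℝ) - 1 ≠ 0 := by
      have : (1 : ℝ) < k := by exact_mod_cast hk
      linarith
    have hk2 : (k : ℝ) + 1 ≠ 0 := by positivity
    rw [div_mul_eq_mul_div, eq_div_iff hk2]
    apply mul_left_cancel₀ hk1
    linear_combination ((k : ℝ) + 1) * h1 + ((i : ℝ) + 1) * (k - (i + 1)) * h2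
  · -- For `k = 1` the factor `k - 1` carries no information, but the only bridge is zero.
    obtain rfl : k = 1 := by omega
    obtain rfl : i = 0 := Subsingleton.elim _ _
    simp

lemma sum_mul_sub (K : ℝ) (n : ℕ) :
    ∑ i ∈ range n, ((i : ℝ) + 1) * (K - ((i : ℝ) + 1))
      = K * (n * (n + 1) / 2) - n * (n + 1) * (2 * n + 1) / 6 := by
  induction n with
  | zero => simp
  | succ n ih =>
    rw [sum_range_succ, ih]
    push_cast
    ring

/-- For every `k ≥ 1` and `1 ≤ j ≤ k`: `Σ_{x ∈ 𝓑_k⁺} x_j = 0`,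
`Σ_{x ∈ 𝓑_k⁺} x_j² = (2j(k−j)/(k+1))·C(2k−1, k−1)`, and consequently
`Σ_{j=1}^{k} Σ_{x ∈ 𝓑_k⁺} x_j² = (k(k−1)/3)·C(2k−1, k−1)`; equivalently, a uniform random
bridge `(X_1, …, X_k)` on `𝓑_k⁺` satisfies `E[X_j] = 0`, `E[X_j²] = 2j(k−j)/(k+1)` and
`Σ_j E[X_j²] = k(k−1)/3`. -/
theorem bridge_moments (k : ℕ) (hk : 1 ≤ k) (j : ℕ) (hj1 : 1 ≤ j) (hjk : j ≤ k) :
    (∑ᶠ x ∈ bridgeSet k, ((x ⟨j - 1, by omega⟩ : ℤ) : ℝ)) = 0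
    ∧ (∑ᶠ x ∈ bridgeSet k, (((x ⟨j - 1, by omega⟩ : ℤ) : ℝ)) ^ 2)
        = 2 * (j : ℝ) * ((k : ℝ) - (j : ℝ)) / ((k : ℝ) + 1)
            * (Nat.choose (2 * k - 1) (k - 1) : ℝ)
    ∧ (∑ i : Fin k, ∑ᶠ x ∈ bridgeSet k, (((x i : ℤ) : ℝ)) ^ 2)
        = (k : ℝ) * ((k : ℝ) - 1) / 3 * (Nat.choose (2 * k - 1) (k - 1) : ℝ) := by
  have hj : (((j - 1 : ℕ) : ℝ) + 1) = j := by
    rw [Nat.cast_sub hj1]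
    push_cast
    ring
  refine ⟨bridge_first _, ?_, ?_⟩
  · rw [bridge_second]
    simp only [hj]
  · simp only [bridge_second]
    rw [Fin.sum_univ_eq_sum_range (fun i => 2 * ((i : ℝ) + 1) * ((k : ℝ) - ((i : ℝ) + 1))
      / ((k : ℝ) + 1) * ((2 * k - 1).choose (k - 1) : ℕ)) k, ← sum_mul, ← sum_div]
    simp only [mul_assoc (2 : ℝ)]
    rw [← mul_sum, sum_mul_sub]
    have hk2 : (k : ℝ) + 1 ≠ 0 := by positivity
    field_simp
    ring
end
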